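/- For every natural number n > 2 there exists a real constant c_n such that, as x → ∞, the quantity [(∑ over pairs (I, J) ∈ P(x) of N(I ⊔ J)^n) / (number of pairs in P(x))] / x^(n−1) converges to c_n; that is, the n-th moment of the norm of the greatest common divisor of two nonzero ideals of ℤ[i] chosen uniformly and independently from those of norm at most x is asymptotic to c_n·x^(n−1). -/

import Mathlib

/-- The absolute norm of an ideal of `ℤ[i]`: the cardinality of the quotient ring. -/
noncomputable def normI (I : Ideal GaussianInt) : ℕ := Nat.card (GaussianInt ⧸ I)

/-- `P x` : pairs of nonzero ideals of `ℤ[i]` with both norms at most `x`. -/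
noncomputable def P (x : ℝ) : Set (Ideal GaussianInt × Ideal GaussianInt) :=
  {p | p.1 ≠ ⊥ ∧ p.2 ≠ ⊥ ∧ (normI p.1 : ℝ) ≤ x ∧ (normI p.2 : ℝ) ≤ x}

open Filter Topology

noncomputable def FF {ι : Type*} (N : ι → ℕ) (n : ℕ) (y : ℝ) : ℝ :=
  ∑' i, if (N i : ℝ) ≤ y then (N i : ℝ) ^ n else 0

section gen
variable {ι : Type*} (N : ι → ℕ) (hfin : ∀ k : ℕ, {i | N i ≤ k}.Finite)

include hfin in
theorem FF_supp (y : ℝ) : {i | (N i : ℝ) ≤ y}.Finite := by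
  refine (hfin ⌊y⌋₊).subset fun i hi => ?_
  exact Nat.le_floor hi

include hfin in
theorem FF_summable (n : ℕ) (y : ℝ) :
    Summable (fun i => if (N i : ℝ) ≤ y then (N i : ℝ) ^ n else 0) := by
  refine summable_of_hasFiniteSupport ((FF_supp N hfin y).subset fun i hi => ?_)
  by_contra h
  exact hi (if_neg h)

include hfin in
theorem FF_mono (n : ℕ) : Monotone (FF N n) := by
  intro y z hyz
  refine (FF_summable N hfin n y).tsum_le_tsum (fun i => ?_) (FF_summable N hfin n z)
  split_ifs with h1 h2
  · exact le_rfl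
  · exact absurd (h1.trans hyz) h2
  · positivity
  · exact le_rfl

theorem FF_nonneg (n : ℕ) (y : ℝ) : 0 ≤ FF N n y :=
  tsum_nonneg fun i => by split_ifs <;> positivity

include hfin in
theorem FF_le (n : ℕ) (y : ℝ) : FF N n y ≤ y ^ n * FF N 0 y := by
  unfold FF
  rw [← tsum_mul_left]
  refine (FF_summable N hfin n y).tsum_le_tsum (fun i => ?_)
    ((FF_summable N hfin 0 y).mul_left _)
  split_ifs with h1
  · simp only [pow_zero, mul_one]; gcongr
  · simp

include hfin in
theorem FF_eq_sum (n : ℕ) (y : ℝ) (hy : 0 ≤ y) :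
    FF N n y = ∑ k ∈ Finset.Icc 0 ⌊y⌋₊, (k : ℝ) ^ n * (Nat.card {i // N i = k} : ℝ) := by
  classical
  unfold FF
  set s := (hfin ⌊y⌋₊).toFinset with hs
  rw [tsum_eq_sum (s := s)]
  · rw [← Finset.sum_fiberwise_of_maps_to (g := N) (t := Finset.Icc 0 ⌊y⌋₊)]
    · refine Finset.sum_congr rfl fun k hk => ?_
      have : (Nat.card {i // N i = k}) = (s.filter (fun i => N i = k)).card := by
        refine Nat.subtype_card _ fun i => ?_
        simp only [Finset.mem_filter, hs, Set.Finite.mem_toFinset, Set.mem_ofPred_eq]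
        simp only [Finset.mem_Icc] at hk
        refine ⟨fun h => h.2, fun h => ⟨h ▸ hk.2, h⟩⟩
      rw [this, mul_comm, ← nsmul_eq_mul, ← Finset.sum_const]
      refine Finset.sum_congr rfl fun i hi => ?_
      simp only [Finset.mem_filter, hs, Set.Finite.mem_toFinset, Set.mem_ofPred_eq] at hi
      rw [if_pos ((Nat.le_floor_iff hy).1 hi.1), hi.2]
    · intro i hi
      simpa [hs] using hi
  · intro i hi
    refine if_neg fun h => hi ?_
    simpa [hs] using Nat.le_floor h

variable (h1 : ∀ i, 1 ≤ N i) (κ : ℝ) (hκ : Tendsto (fun y => FF N 0 y / y) atTop (𝓝 κ))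

include hfin h1 hκ in
theorem A_bound : ∃ K : ℝ, 0 ≤ K ∧ ∀ y, 0 ≤ y → FF N 0 y ≤ K * y := by
  have := hκ.eventually (eventually_le_nhds (show κ < |κ| + 1 by linarith [le_abs_self κ]))
  obtain ⟨Y, hY⟩ := eventually_atTop.1 this
  set Z := max Y 1
  have hZ : (0:ℝ) < Z := lt_max_of_lt_right one_pos
  refine ⟨max (|κ| + 1) (FF N 0 Z), le_max_of_le_left (by positivity), fun y hy => ?_⟩
  rcases le_or_gt Z y with h | h
  · have h2 := hY y ((le_max_left _ _).trans h)
    rw [div_le_iff₀ (hZ.trans_le h)] at h2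
    exact h2.trans (by gcongr; exact le_max_left _ _)
  · rcases lt_or_ge y 1 with h3 | h3
    · have : FF N 0 y = 0 := by
        unfold FF
        convert tsum_zero with i
        refine if_neg fun h => ?_
        have : (1:ℝ) ≤ N i := by exact_mod_cast h1 i
        linarith
      rw [this]
      have := FF_nonneg N 0 Z
      positivity
    · calc FF N 0 y ≤ FF N 0 Z := FF_mono N hfin 0 h.le
        _ ≤ max (|κ| + 1) (FF N 0 Z) * 1 := by rw [mul_one]; exact le_max_right _ _
        _ ≤ _ := by gcongr

include hfin h1 hκ in
theorem FF_tendsto (n : ℕ) (hn : 1 ≤ n) :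
    ∃ l, Tendsto (fun y => FF N n y / y ^ (n + 1)) atTop (𝓝 l) := by
  obtain ⟨K, hK0, hK⟩ := A_bound N hfin h1 κ hκ
  have key : ∀ y : ℝ, 0 < y → FF N n y / y ^ (n + 1) = FF N 0 y / y -
      ∫ u in (0:ℝ)..1, (n * u ^ (n - 1)) * (FF N 0 (u * y) / y) := by
    intro y hy
    have e := sum_mul_eq_sub_integral_mul (𝕜 := ℝ) (fun k => (Nat.card {i // N i = k} : ℝ))
      (f := fun t : ℝ => t ^ n) hy.le (fun t _ => by fun_prop) (by
        rw [show deriv (fun t : ℝ => t ^ n) = fun t : ℝ => (n:ℝ) * t ^ (n-1) by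
          funext t; simp]
        exact (by fun_prop : Continuous fun t : ℝ => (n:ℝ) * t ^ (n-1)).integrableOn_Icc)
    rw [← FF_eq_sum N hfin n y hy.le] at e
    have e2 : ∀ t : ℝ, 0 ≤ t → 
      ∑ k ∈ Finset.Icc 0 ⌊t⌋₊, (Nat.card {i // N i = k} : ℝ) = FF N 0 t := by
      intro t ht
      rw [FF_eq_sum N hfin 0 t ht]; simp
    rw [e2 y hy.le, MeasureTheory.setIntegral_congr_fun (g := fun t => (n * t ^ (n-1)) * FF N 0 t)
      measurableSet_Ioc (fun t ht => by simp only [deriv_pow_field]; rw [e2 t ht.1.le]),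
      ← intervalIntegral.integral_of_le hy.le] at e
    have e3 := intervalIntegral.integral_comp_mul_right (a := 0) (b := 1)
      (fun t => (n * t ^ (n-1)) * FF N 0 t) hy.ne'
    rw [zero_mul, one_mul] at e3
    rw [smul_eq_mul, eq_inv_mul_iff_mul_eq₀ hy.ne'] at e3
    rw [e, ← e3, sub_div]
    congr 1
    · field_simp; ring
    · rw [mul_comm, mul_div_assoc, mul_comm, ← intervalIntegral.integral_const_mul]
      refine intervalIntegral.integral_congr fun u _ => ?_
      obtain ⟨m, rfl⟩ : ∃ m, n = m + 1 := ⟨n - 1, by omega⟩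
      simp only [Nat.add_sub_cancel]
      field_simp
      rw [mul_pow]
      ring
  refine ⟨κ - ∫ u in (0:ℝ)..1, (n * u ^ (n - 1)) * (u * κ), ?_⟩
  refine (hκ.sub ?_).congr' ((eventually_gt_atTop 0).mono fun y hy => (key y hy).symm)
  refine intervalIntegral.tendsto_integral_filter_of_dominated_convergence
    (fun u => n * K) ?_ ?_ ?_ ?_
  · refine Eventually.of_forall fun y => Measurable.aestronglyMeasurable ?_
    have := (FF_mono N hfin 0).measurable
    fun_prop
  · filter_upwards [eventually_gt_atTop 0] with y hy
    refine Eventually.of_forall fun u hu => ?_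
    rw [Set.uIoc_of_le zero_le_one] at hu
    have := FF_nonneg N 0 (u * y)
    have hu0 := hu.1.le
    rw [Real.norm_of_nonneg (by positivity)]
    have h3 : (u:ℝ) ^ (n-1) ≤ 1 := pow_le_one₀ hu0 hu.2
    have h4 : FF N 0 (u * y) / y ≤ K := by
      rw [div_le_iff₀ hy]
      refine (hK _ (by positivity)).trans ?_
      gcongr
      nlinarith [hu.2]
    calc _ ≤ (n * 1) * K := by gcongr
      _ = _ := by ring
  · simp
  · refine Eventually.of_forall fun u hu => ?_
    rw [Set.uIoc_of_le zero_le_one] at hu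
    refine Tendsto.const_mul _ ?_
    have : Tendsto (fun y : ℝ => u * y) atTop atTop := tendsto_id.const_mul_atTop hu.1
    refine ((hκ.comp this).const_mul u).congr fun y => ?_
    have := hu.1.ne'
    simp only [Function.comp]
    field_simp

include hfin h1 hκ in
theorem summable_N : Summable fun i => ((N i : ℝ) ^ 2)⁻¹ := by
  obtain ⟨K, hK0, hK⟩ := A_bound N hfin h1 κ hκ
  have hf : ∀ k, Finite {i // N i = k} := fun k =>
    ((hfin k).subset fun i (hi : N i = k) => hi.le).to_subtype
  rw [← (Equiv.sigmaFiberEquiv N).summable_iff, summable_sigma_of_nonneg (fun _ => by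
    simp only [Function.comp]; positivity)]
  refine ⟨fun k => Summable.of_finite, ?_⟩
  have hb : (fun n : ℕ => ∑ k ∈ Finset.Icc 1 n, ‖((Nat.card {i // N i = k} : ℝ) : ℂ)‖) =O[atTop]
      fun n : ℕ => (n:ℝ) ^ (1:ℝ) := by
    refine Asymptotics.IsBigO.of_bound K (Eventually.of_forall fun n => ?_)
    have := hK n (by positivity)
    rw [FF_eq_sum N hfin 0 n (by positivity)] at this
    simp only [pow_zero, one_mul, Nat.floor_natCast] at this
    rw [Real.norm_of_nonneg (by positivity), Real.rpow_one, Real.norm_of_nonneg (by positivity)]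
    refine le_trans ?_ this
    simp only [Complex.ofReal_natCast, Complex.norm_natCast]
    exact Finset.sum_le_sum_of_subset_of_nonneg (Finset.Icc_subset_Icc (by simp) le_rfl)
      (fun _ _ _ => by positivity)
  have := (LSeriesSummable_of_sum_norm_bigO hb zero_le_one (s := 2) (by norm_num)).norm
  refine this.congr fun k => ?_
  have e : ∀ c : {i // N i = k}, (((fun i => ((N i : ℝ) ^ 2)⁻¹) ∘ (Equiv.sigmaFiberEquiv N)) ⟨k, c⟩)
      = ((k:ℝ)^2)⁻¹ := fun c => by simp [Equiv.sigmaFiberEquiv, c.2]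
  simp only [e, tsum_const]
  rw [LSeries.norm_term_eq]
  split_ifs with h
  · simp [h]
  · simp [div_eq_mul_inv]

end gen

noncomputable def gEquiv : GaussianInt ≃ₗ[ℤ] (Fin 2 → ℤ) where
  toFun z := ![z.re, z.im]
  invFun v := ⟨v 0, v 1⟩
  map_add' x y := by ext i; fin_cases i <;> simp
  map_smul' x y := by ext i; fin_cases i <;> simp
  left_inv z := by simp
  right_inv v := by ext i; fin_cases i <;> simp

instance : Module.Finite ℤ GaussianInt := Module.Finite.equiv gEquiv.symm
instance : Module.Free ℤ GaussianInt := Module.Free.of_equiv gEquiv.symm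
instance : CharZero GaussianInt := inferInstanceAs (CharZero (ℤ√(-1)))

theorem normI_eq (I : Ideal GaussianInt) : normI I = Ideal.absNorm I := by
  rw [Ideal.absNorm_apply]; rfl

theorem count_lim_aux (K : Type) [Field K] [CharZero K] [Algebra GaussianInt K]
    [IsFractionRing GaussianInt K] : ∃ κ : ℝ, 0 < κ ∧ Tendsto (fun s : ℝ =>
    (Nat.card {I : {I : Ideal GaussianInt // I ≠ ⊥} // (normI I.1 : ℝ) ≤ s} : ℝ) / s)
      atTop (𝓝 κ) := by
  have : IsIntegralClosure GaussianInt ℤ K :=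
    IsIntegralClosure.of_isIntegrallyClosed _ _ _
  have : NumberField K := { to_charZero := inferInstance, to_finiteDimensional := Module.Finite.of_isLocalization ℤ GaussianInt (nonZeroDivisors ℤ) }
  let e := NumberField.RingOfIntegers.equiv (K := K) GaussianInt
  refine ⟨_, NumberField.dedekindZeta_residue_pos K,
    (NumberField.Ideal.tendsto_norm_le_div_atTop₀ K).congr fun s => ?_⟩
  congr 2
  refine Nat.card_congr (Equiv.subtypeEquiv (Equiv.subtypeEquiv (e.idealComapOrderIso).symm.toEquiv ?_) ?_)
  · intro I
    have h : e.idealComapOrderIso.symm I = ⊥ ↔ I = ⊥ := map_eq_bot_iff _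
    simp only [mem_nonZeroDivisors_iff_ne_zero]
    exact (not_congr h).symm
  · intro I
    have h : normI (e.idealComapOrderIso.symm I.1) = Ideal.absNorm I.1 := by
      rw [Ideal.absNorm_apply]
      exact (Nat.card_congr (Ideal.quotientEquiv I.1 _ e
        (RingEquiv.idealComapOrderIso_symm_apply _ _)).toEquiv).symm
    change _ ↔ ((normI (e.idealComapOrderIso.symm I.1) : ℕ) : ℝ) ≤ s
    rw [h]

theorem count_lim : ∃ κ : ℝ, 0 < κ ∧ Tendsto (fun s : ℝ =>
    (Nat.card {I : {I : Ideal GaussianInt // I ≠ ⊥} // (normI I.1 : ℝ) ≤ s} : ℝ) / s)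
      atTop (𝓝 κ) := count_lim_aux (FractionRing GaussianInt)

abbrev NZ := {I : Ideal GaussianInt // I ≠ ⊥}
noncomputable def NN (I : NZ) : ℕ := normI I.1

theorem NN_fin (k : ℕ) : {I | NN I ≤ k}.Finite := by
  have := Ideal.finite_setOfPred_absNorm_le (S := GaussianInt) k
  refine Set.Finite.of_finite_image (f := Subtype.val) (this.subset ?_)
    Subtype.val_injective.injOn
  rintro _ ⟨I, hI, rfl⟩
  change NN I ≤ k at hI
  change Ideal.absNorm I.1 ≤ k
  rwa [← normI_eq]

theorem NN_pos (I : NZ) : 1 ≤ NN I := by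
  unfold NN
  rw [normI_eq, Nat.one_le_iff_ne_zero, Ne, Ideal.absNorm_eq_zero_iff]
  exact I.2

abbrev CP := {q : NZ × NZ // q.1.1 ⊔ q.2.1 = ⊤}
def nzmul (I J : NZ) : NZ := ⟨I.1 * J.1, mul_ne_zero I.2 J.2⟩
theorem NN_mul (I J : NZ) : NN (nzmul I J) = NN I * NN J := by
  simp only [NN, nzmul, normI_eq, map_mul]

def cmap (t : CP × NZ) : NZ × NZ := (nzmul t.2 t.1.1.1, nzmul t.2 t.1.1.2)

theorem cmap_sup (t : CP × NZ) : (cmap t).1.1 ⊔ (cmap t).2.1 = t.2.1 := by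
  change t.2.1 * t.1.1.1.1 ⊔ t.2.1 * t.1.1.2.1 = t.2.1
  rw [← Ideal.mul_sup, t.1.2, Ideal.mul_top]

theorem cmap_bij : Function.Bijective cmap := by
  constructor
  · intro t t' h
    have hD : t.2 = t'.2 := by
      apply Subtype.ext
      rw [← cmap_sup t, ← cmap_sup t', h]
    have ha : t.2.1 * t.1.1.1.1 = t'.2.1 * t'.1.1.1.1 := congrArg (fun p => p.1.1) h
    have hb : t.2.1 * t.1.1.2.1 = t'.2.1 * t'.1.1.2.1 := congrArg (fun p => p.2.1) h
    rw [hD] at ha hb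
    refine Prod.ext (Subtype.ext (Prod.ext (Subtype.ext ?_) (Subtype.ext ?_))) hD
    · exact mul_left_cancel₀ t'.2.2 ha
    · exact mul_left_cancel₀ t'.2.2 hb
  · rintro ⟨⟨I, hI⟩, ⟨J, hJ⟩⟩
    obtain ⟨I', hI'⟩ := Ideal.dvd_iff_le.2 (le_sup_left : I ≤ I ⊔ J)
    obtain ⟨J', hJ'⟩ := Ideal.dvd_iff_le.2 (le_sup_right : J ≤ I ⊔ J)
    have hD : I ⊔ J ≠ ⊥ := fun h => hI (le_bot_iff.1 (h ▸ le_sup_left))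
    have hI0 : I' ≠ ⊥ := by rintro rfl; exact hI (by rw [hI', Ideal.mul_bot])
    have hJ0 : J' ≠ ⊥ := by rintro rfl; exact hJ (by rw [hJ', Ideal.mul_bot])
    have hc : I' ⊔ J' = ⊤ := by
      apply mul_left_cancel₀ (a := I ⊔ J) hD
      rw [Ideal.mul_top, Ideal.mul_sup, ← hI', ← hJ']
    exact ⟨(⟨(⟨I', hI0⟩, ⟨J', hJ0⟩), hc⟩, ⟨I ⊔ J, hD⟩),
      Prod.ext (Subtype.ext hI'.symm) (Subtype.ext hJ'.symm)⟩

noncomputable def MM (q : CP) : ℕ := max (NN q.1.1) (NN q.1.2)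

theorem MM_pos (q : CP) : 1 ≤ MM q := le_max_of_le_left (NN_pos _)

def SS (x : ℝ) : Set (NZ × NZ) := {p | (NN p.1 : ℝ) ≤ x ∧ (NN p.2 : ℝ) ≤ x}

noncomputable def eP (x : ℝ) : SS x ≃ P x where
  toFun p := ⟨(p.1.1.1, p.1.2.1), p.1.1.2, p.1.2.2, p.2.1, p.2.2⟩
  invFun p := ⟨(⟨p.1.1, p.2.1⟩, ⟨p.1.2, p.2.2.1⟩), p.2.2.2.1, p.2.2.2.2⟩
  left_inv _ := rfl
  right_inv _ := rfl

theorem SS_fin (x : ℝ) : (SS x).Finite :=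
  ((FF_supp NN NN_fin x).prod (FF_supp NN NN_fin x)).subset fun _ hp => ⟨hp.1, hp.2⟩

theorem FF_zero_eq (x : ℝ) : FF NN 0 x = (Nat.card {I : NZ // (NN I : ℝ) ≤ x} : ℝ) := by
  unfold FF
  have : (fun i : NZ => if (NN i : ℝ) ≤ x then (NN i : ℝ) ^ 0 else 0)
      = Set.indicator {I : NZ | (NN I : ℝ) ≤ x} (fun _ => (1 : ℝ)) := by
    funext i
    simp [Set.indicator_apply]
  rw [this, ← tsum_subtype, tsum_const, nsmul_eq_mul, mul_one]
  rfl

theorem P_card (x : ℝ) : ((P x).ncard : ℝ) = FF NN 0 x ^ 2 := by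
  rw [FF_zero_eq, ← Nat.card_coe_set_eq, ← Nat.card_congr (eP x)]
  have : SS x = {I : NZ | (NN I : ℝ) ≤ x} ×ˢ {I : NZ | (NN I : ℝ) ≤ x} := rfl
  rw [this, Nat.card_congr (Equiv.Set.prod _ _), Nat.card_prod, sq]
  push_cast
  rfl

theorem cmap_mem (x : ℝ) (t : CP × NZ) : cmap t ∈ SS x ↔ (NN t.2 : ℝ) ≤ x / MM t.1 := by
  have hM : (0:ℝ) < MM t.1 := by exact_mod_cast MM_pos t.1
  rw [le_div_iff₀ hM]
  change ((NN (nzmul t.2 t.1.1.1) : ℕ) : ℝ) ≤ x ∧ ((NN (nzmul t.2 t.1.1.2) : ℕ) : ℝ) ≤ x ↔ _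
  rw [NN_mul, NN_mul, MM]
  push_cast
  rw [mul_max_of_nonneg _ _ (Nat.cast_nonneg _), max_le_iff]

theorem P_sum (n : ℕ) (x : ℝ) :
    (∑' p : P x, (normI (p.1.1 ⊔ p.1.2) : ℝ) ^ n) = ∑' q : CP, FF NN n (x / MM q) := by
  rw [← (eP x).tsum_eq]
  have h1 : (∑' p : SS x, (normI ((eP x p).1.1 ⊔ (eP x p).1.2) : ℝ) ^ n) =
      ∑' p : NZ × NZ, (SS x).indicator (fun p => (normI (p.1.1 ⊔ p.2.1) : ℝ) ^ n) p := by
    rw [← tsum_subtype]; rfl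
  rw [h1, ← (Equiv.ofBijective cmap cmap_bij).tsum_eq]
  have h2 : ∀ t : CP × NZ, (SS x).indicator (fun p => (normI (p.1.1 ⊔ p.2.1) : ℝ) ^ n)
      (Equiv.ofBijective cmap cmap_bij t) =
      if (NN t.2 : ℝ) ≤ x / MM t.1 then (NN t.2 : ℝ) ^ n else 0 := by
    intro t
    classical
    rw [Set.indicator_apply]
    simp only [Equiv.ofBijective_apply, cmap_mem, cmap_sup]
    rfl
  simp only [h2]
  rw [Summable.tsum_prod (f := fun t : CP × NZ =>
    if (NN t.2 : ℝ) ≤ x / MM t.1 then (NN t.2 : ℝ) ^ n else 0)]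
  · rfl
  · refine summable_of_hasFiniteSupport
      (((SS_fin x).preimage cmap_bij.1.injOn).subset fun t ht => ?_)
    change cmap t ∈ SS x
    rw [cmap_mem]
    by_contra h
    exact ht (if_neg h)

theorem higherMoment_asymptotic (n : ℕ) (hn : 2 < n) :
    ∃ c : ℝ, Filter.Tendsto
      (fun x : ℝ =>
        ((∑' p : P x, (normI (p.1.1 ⊔ p.1.2) : ℝ) ^ n) / ((P x).ncard : ℝ)) / x ^ (n - 1))
      Filter.atTop (nhds c) := by
  obtain ⟨κ, hκ0, hκ'⟩ := count_lim
  have hκ : Tendsto (fun y => FF NN 0 y / y) atTop (𝓝 κ) :=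
    hκ'.congr fun y => by rw [FF_zero_eq]; rfl
  obtain ⟨l, hl⟩ := FF_tendsto NN NN_fin NN_pos κ hκ n (by omega)
  obtain ⟨K, hK0, hK⟩ := A_bound NN NN_fin NN_pos κ hκ
  have hs := summable_N NN NN_fin NN_pos κ hκ
  have hs2 : Summable fun q : CP =>
      K * (((NN q.1.1 : ℝ) ^ 2)⁻¹ * ((NN q.1.2 : ℝ) ^ 2)⁻¹) :=
    ((hs.mul_of_nonneg hs (fun _ => by positivity) (fun _ => by positivity)).comp_injective
      (Subtype.val_injective (p := fun q : NZ × NZ => q.1.1 ⊔ q.2.1 = ⊤))).mul_left K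
  have main : Tendsto (fun x : ℝ => ∑' q : CP, FF NN n (x / MM q) / x ^ (n + 1)) atTop
      (𝓝 (∑' q : CP, l * ((MM q : ℝ) ^ (n + 1))⁻¹)) := by
    refine tendsto_tsum_of_dominated_convergence hs2 (fun q => ?_) ?_
    · have hM : (0:ℝ) < MM q := by exact_mod_cast MM_pos q
      have ht : Tendsto (fun x : ℝ => x / MM q) atTop atTop := tendsto_id.atTop_div_const hM
      refine ((hl.comp ht).mul_const _).congr fun x => ?_
      simp only [Function.comp]
      rw [div_pow]
      field_simp
    · filter_upwards [eventually_gt_atTop 0] with x hx q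
      have hM : (1:ℝ) ≤ MM q := by exact_mod_cast MM_pos q
      have ha : (1:ℝ) ≤ NN q.1.1 := by exact_mod_cast NN_pos _
      have hb : (1:ℝ) ≤ NN q.1.2 := by exact_mod_cast NN_pos _
      have haM : (NN q.1.1 : ℝ) ≤ MM q := by exact_mod_cast le_max_left _ _
      have hbM : (NN q.1.2 : ℝ) ≤ MM q := by exact_mod_cast le_max_right _ _
      rw [Real.norm_of_nonneg (div_nonneg (FF_nonneg _ _ _) (by positivity)),
        div_le_iff₀ (by positivity)]
      have hy : 0 ≤ x / MM q := by positivity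
      have h4 : (NN q.1.1 : ℝ) ^ 2 * (NN q.1.2 : ℝ) ^ 2 ≤ (MM q : ℝ) ^ (n + 1) := by
        calc _ ≤ (MM q : ℝ) ^ 2 * (MM q : ℝ) ^ 2 := by gcongr
          _ = (MM q : ℝ) ^ 4 := by ring
          _ ≤ _ := pow_le_pow_right₀ hM (by omega)
      calc FF NN n (x / MM q) ≤ (x / MM q) ^ n * FF NN 0 (x / MM q) := FF_le NN NN_fin n _
        _ ≤ (x / MM q) ^ n * (K * (x / MM q)) := by gcongr; exact hK _ hy
        _ = K * ((MM q : ℝ) ^ (n + 1))⁻¹ * x ^ (n + 1) := by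
          rw [div_pow]; field_simp; try ring
        _ ≤ _ := by
          rw [← mul_inv]
          gcongr
  refine ⟨_, (main.div (hκ.pow 2) (by positivity)).congr' ?_⟩
  filter_upwards [eventually_gt_atTop 0] with x hx
  simp only [Pi.div_apply, Pi.pow_apply]
  rw [P_sum, P_card, tsum_div_const]
  obtain ⟨m, rfl⟩ : ∃ m, n = m + 1 := ⟨n - 1, by omega⟩
  simp only [Nat.add_sub_cancel]
  by_cases h0 : FF NN 0 x = 0
  · simp [h0]
  · field_simp
    ring
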